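/- arXiv:2007.10864 — 2 statements merged into one kernel-verified Lean document; each statement's English description precedes it below -/
import Mathlib

section
/- Let (X,d,μ) be a space of homogeneous type and let p(·) be an exponent function with p(·) ∈ LH and p₊ < ∞. If w is a weight for which there exists a constant C such that ‖t·χ_{{x∈X : Mf(x) > t}}·w‖_{p(·)} ≤ C‖f·w‖_{p(·)} for all measurable functions f and all t > 0, then w ∈ A_{p(·)}. -/
open MeasureTheory ENNReal NNReal Filter

namespace SHT

variable {X : Type*} [MeasurableSpace X]

/-- The quasi-metric ball `B(x,r) = {y | d x y < r}`. -/
def ball (d : X → X → ℝ) (x : X) (r : ℝ) : Set X := {y | d x y < r}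

/-- `(X, d, μ)` is a space of homogeneous type with quasi-metric constant `A₀`
and doubling constant `Cμ`. -/
structure IsSHT (d : X → X → ℝ) (μ : Measure X) (A₀ Cμ : ℝ) : Prop where
  d_nonneg : ∀ x y, 0 ≤ d x y
  d_eq_zero_iff : ∀ x y, d x y = 0 ↔ x = y
  d_symm : ∀ x y, d x y = d y x
  one_le_A₀ : 1 ≤ A₀
  d_triangle : ∀ x y z, d x y ≤ A₀ * (d x z + d z y)
  one_le_Cμ : 1 ≤ Cμ
  measurableSet_ball : ∀ x r, MeasurableSet (ball d x r)
  ball_pos : ∀ x r, 0 < r → 0 < μ (ball d x r)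
  ball_ne_top : ∀ x r, 0 < r → μ (ball d x r) ≠ ⊤
  doubling : ∀ x r, 0 < r → μ (ball d x (2 * r)) ≤ ENNReal.ofReal Cμ * μ (ball d x r)

/-- The modular `ρ_{p(·)}(f) = ∫_{X ∖ X_∞} f(x)^{p(x)} dμ + ‖f‖_{L^∞(X_∞)}`
for an (extended-real valued) exponent `p` and a nonnegative function `f`. -/
noncomputable def modular (μ : Measure X) (p : X → ℝ≥0∞) (f : X → ℝ≥0∞) : ℝ≥0∞ :=
  (∫⁻ x in {x | p x ≠ ⊤}, f x ^ (p x).toReal ∂μ) + essSup f (μ.restrict {x | p x = ⊤})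

/-- The Luxemburg norm `‖f‖_{p(·)} = inf {λ > 0 | ρ_{p(·)}(f/λ) ≤ 1}`. -/
noncomputable def luxNorm (μ : Measure X) (p : X → ℝ≥0∞) (f : X → ℝ≥0∞) : ℝ≥0∞ :=
  sInf {lam : ℝ≥0∞ | 0 < lam ∧ modular μ p (fun x => f x / lam) ≤ 1}

/-- The pointwise conjugate exponent `p'(x) = p(x)/(p(x)-1)`, with the conventions
`p'(x) = ∞` if `p(x) = 1` and `p'(x) = 1` if `p(x) = ∞`. -/
noncomputable def conjExp (p : X → ℝ≥0∞) : X → ℝ≥0∞ := fun x =>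
  if p x = ⊤ then 1 else p x / (p x - 1)

/-- A real-valued exponent function viewed as an extended-real valued one. -/
noncomputable def ofRealExp (p : X → ℝ) : X → ℝ≥0∞ := fun x => ENNReal.ofReal (p x)

/-- Local log-Hölder continuity of an exponent function. -/
def LH0 (d : X → X → ℝ) (p : X → ℝ) : Prop :=
  ∃ C₀ : ℝ, 0 < C₀ ∧ ∀ x y, 0 < d x y → d x y < 1 / 2 →
    |p x - p y| ≤ C₀ / (-Real.log (d x y))

/-- Log-Hölder continuity at infinity, with respect to the base point `x₀`
and with limit value `pinf`. -/
def LHinf (d : X → X → ℝ) (x₀ : X) (p : X → ℝ) (pinf : ℝ) : Prop :=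
  ∃ Cinf : ℝ, 0 < Cinf ∧ ∀ x, |p x - pinf| ≤ Cinf / Real.log (Real.exp 1 + d x x₀)

/-- Global log-Hölder continuity. -/
def LH (d : X → X → ℝ) (x₀ : X) (p : X → ℝ) : Prop :=
  LH0 d p ∧ ∃ pinf : ℝ, LHinf d x₀ p pinf

/-- `w` is a weight: measurable, positive and finite a.e., and locally integrable. -/
def IsWeight (d : X → X → ℝ) (μ : Measure X) (w : X → ℝ≥0∞) : Prop :=
  Measurable w ∧ (∀ᵐ x ∂μ, 0 < w x ∧ w x < ⊤) ∧
    ∀ (x : X) (r : ℝ), 0 < r → (∫⁻ y in ball d x r, w y ∂μ) ≠ ⊤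

/-- The variable Muckenhoupt condition `w ∈ A_{p(·)}`:
`‖w χ_B‖_{p(·)} ‖w⁻¹ χ_B‖_{p'(·)} ≤ K μ(B)` for all quasi-metric balls `B`. -/
def Apvar (d : X → X → ℝ) (μ : Measure X) (p : X → ℝ≥0∞) (w : X → ℝ≥0∞) : Prop :=
  ∃ K : ℝ≥0, ∀ (x : X) (r : ℝ), 0 < r →
    luxNorm μ p ((ball d x r).indicator w) *
      luxNorm μ (conjExp p) ((ball d x r).indicator fun y => (w y)⁻¹) ≤ K * μ (ball d x r)

/-- The uncentered Hardy–Littlewood maximal operator over quasi-metric balls. -/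
noncomputable def maximal (d : X → X → ℝ) (μ : Measure X) (f : X → ℝ≥0∞) (x : X) : ℝ≥0∞ :=
  ⨆ (z : X) (r : ℝ) (_ : 0 < r ∧ x ∈ ball d z r),
    (μ (ball d z r))⁻¹ * ∫⁻ y in ball d z r, f y ∂μ

/-- `f ∈ L^{p(·)}`: the modular of `f/λ` is finite for some `λ > 0`. -/
def MemLpvar (μ : Measure X) (p : X → ℝ≥0∞) (f : X → ℝ≥0∞) : Prop :=
  ∃ lam : ℝ≥0∞, 0 < lam ∧ modular μ p (fun x => f x / lam) < ⊤

/-!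
Test the weak-type inequality on `f = h w⁻¹`: since `Mf ≥ ⨍_B f` on each ball `B`,
`(⨍_B h w⁻¹) ‖w χ_B‖_{p(·)} ≤ C ‖h‖_{p(·)}` for every `h`. Hence the associate norm of
`‖w χ_B‖_{p(·)} w⁻¹ χ_B` is at most `C μ(B)`, and duality up to the factor `3` turns this into
`‖w χ_B‖_{p(·)} ‖w⁻¹ χ_B‖_{p'(·)} ≤ 3 C μ(B)`. Multiplying a Luxemburg norm by any constant in
`[0, ∞]` is allowed in the needed direction, so `‖w χ_B‖_{p(·)}` may be `0` or `∞` throughout.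
-/

section Modular

variable {μ : Measure X} {p f g : X → ℝ≥0∞}

theorem modular_mono (h : f ≤ g) : modular μ p f ≤ modular μ p g := by
  unfold modular
  gcongr with x
  · exact h x
  · exact essSup_mono_ae (.of_forall h)

theorem modular_const_mul_le (hp : Measurable p) (hp1 : ∀ x, 1 ≤ p x) {c : ℝ≥0∞} (hc : c ≤ 1) :
    modular μ p (fun x => c * f x) ≤ c * modular μ p f := by
  have hpow : ∀ x ∈ {x | p x ≠ ⊤},
      (c * f x) ^ (p x).toReal ≤ c * f x ^ (p x).toReal := fun x hx => by
    rw [mul_rpow_of_nonneg _ _ toReal_nonneg]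
    gcongr
    exact rpow_le_self_of_le_one hc (by simpa using toReal_mono hx (hp1 x))
  rw [modular, modular, ENNReal.essSup_const_mul, mul_add,
    ← lintegral_const_mul' _ _ (ne_top_of_le_ne_top one_ne_top hc)]
  gcongr ?_ + _
  exact setLIntegral_mono' (hp (measurableSet_singleton ⊤)).compl hpow

end Modular

section LuxNorm

variable {μ : Measure X} {p f g : X → ℝ≥0∞}

theorem luxNorm_le {c : ℝ≥0∞} (hc : 0 < c) (h : modular μ p (fun x => f x / c) ≤ 1) :
    luxNorm μ p f ≤ c :=
  sInf_le ⟨hc, h⟩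

theorem luxNorm_mono (h : f ≤ g) : luxNorm μ p f ≤ luxNorm μ p g :=
  sInf_le_sInf fun c hc =>
    ⟨hc.1, (modular_mono fun x => ENNReal.div_le_div_right (h x) c).trans hc.2⟩

theorem const_mul_luxNorm_le (t : ℝ≥0∞) :
    t * luxNorm μ p f ≤ luxNorm μ p fun x => t * f x := by
  refine le_sInf fun c hc => mul_le_of_forall_lt fun a ha b hb => ?_
  rcases eq_or_ne a 0 with rfl | ha0
  · simp
  have hle : luxNorm μ p f ≤ c / a := by
    refine luxNorm_le (ENNReal.div_pos hc.1.ne' ha.ne_top) ((modular_mono fun x => ?_).trans hc.2)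
    calc f x / (c / a) = a * f x / c := by
          rw [div_eq_mul_inv, ENNReal.inv_div (.inl ha.ne_top) (.inl ha0), ← mul_div_assoc,
            mul_comm]
      _ ≤ t * f x / c := by gcongr
  calc a * b ≤ a * (c / a) := by gcongr; exact hb.le.trans hle
    _ ≤ c := mul_div_le

theorem luxNorm_le_max_one_modular (hp : Measurable p) (hp1 : ∀ x, 1 ≤ p x) :
    luxNorm μ p f ≤ max 1 (modular μ p f) := by
  set c := max 1 (modular μ p f)
  have hc : 1 ≤ c := le_max_left _ _
  refine luxNorm_le (one_pos.trans_le hc) ?_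
  calc modular μ p (fun x => f x / c) = modular μ p (fun x => c⁻¹ * f x) := by
        simp only [ENNReal.div_eq_inv_mul]
    _ ≤ c⁻¹ * modular μ p f := modular_const_mul_le hp hp1 (ENNReal.inv_le_one.2 hc)
    _ ≤ c⁻¹ * c := by gcongr; exact le_max_right _ _
    _ ≤ 1 := ENNReal.inv_mul_le_one c

theorem luxNorm_indicator_le_lintegral_add_one (hp : Measurable p) (hp1 : ∀ x, 1 ≤ p x)
    {s : Set X} (hs : MeasurableSet s) (hfg : ∀ x ∈ s, p x ≠ ⊤ → f x ^ (p x).toReal ≤ g x)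
    (hf : ∀ x ∈ s, p x = ⊤ → f x ≤ 1) :
    luxNorm μ p (s.indicator f) ≤ ∫⁻ x in s, g x ∂μ + 1 := by
  have hpt : MeasurableSet {x | p x = ⊤} := hp (measurableSet_singleton ⊤)
  refine (luxNorm_le_max_one_modular hp hp1).trans (max_le le_add_self (add_le_add ?_ ?_))
  · calc ∫⁻ x in {x | p x ≠ ⊤}, s.indicator f x ^ (p x).toReal ∂μ
        ≤ ∫⁻ x in {x | p x ≠ ⊤}, s.indicator g x ∂μ :=
          setLIntegral_mono' hpt.compl fun x hx => by
            by_cases hxs : x ∈ s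
            · simpa [hxs] using hfg x hxs hx
            · simp [hxs, toReal_pos (one_pos.trans_le (hp1 x)).ne' hx]
      _ ≤ ∫⁻ x, s.indicator g x ∂μ := setLIntegral_le_lintegral _ _
      _ = ∫⁻ x in s, g x ∂μ := lintegral_indicator hs g
  · refine essSup_le_of_ae_le 1 (ae_restrict_of_forall_mem hpt fun x hx => ?_)
    exact Set.indicator_apply_le' (fun hxs => hf x hxs hx) fun _ => zero_le

theorem luxNorm_indicator_exponent_eq_one_le (hp : Measurable p) (hp1 : ∀ x, 1 ≤ p x) :
    luxNorm μ p ({x | p x = 1}.indicator f) ≤ ∫⁻ x in {x | p x = 1}, f x ∂μ := by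
  set E := {x | p x = 1}
  have hE : MeasurableSet E := hp (measurableSet_singleton 1)
  have hpt : MeasurableSet {x | p x = ⊤} := hp (measurableSet_singleton ⊤)
  refine le_of_forall_gt_imp_ge_of_dense fun c hc => ?_
  have hint : ∫⁻ x in {x | p x ≠ ⊤}, (E.indicator f x / c) ^ (p x).toReal ∂μ ≤ 1 := by
    calc ∫⁻ x in {x | p x ≠ ⊤}, (E.indicator f x / c) ^ (p x).toReal ∂μ
        ≤ ∫⁻ x in {x | p x ≠ ⊤}, c⁻¹ * E.indicator f x ∂μ :=
          setLIntegral_mono' hpt.compl fun x hx => by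
            by_cases hxE : x ∈ E
            · have hx1 : p x = 1 := hxE
              simp [hxE, hx1, ENNReal.div_eq_inv_mul]
            · simp [hxE, toReal_pos (one_pos.trans_le (hp1 x)).ne' hx]
      _ ≤ ∫⁻ x, c⁻¹ * E.indicator f x ∂μ := setLIntegral_le_lintegral _ _
      _ = c⁻¹ * ∫⁻ x in E, f x ∂μ := by
          rw [lintegral_const_mul' _ _ (ENNReal.inv_ne_top.2 (pos_of_gt hc).ne'),
            lintegral_indicator hE]
      _ ≤ c⁻¹ * c := by gcongr
      _ ≤ 1 := ENNReal.inv_mul_le_one c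
  have hsup : essSup (fun x => E.indicator f x / c) (μ.restrict {x | p x = ⊤}) = 0 := by
    refine ENNReal.essSup_eq_zero_iff.2 (ae_restrict_of_forall_mem hpt fun x hx => ?_)
    have hxE : x ∉ E := fun hx1 => one_ne_top (hx1.symm.trans hx)
    simp [hxE]
  refine luxNorm_le (pos_of_gt hc) ?_
  simpa only [modular, hsup, add_zero] using hint

end LuxNorm

section ConjExp

variable {α : Type*} {p : α → ℝ≥0∞} {x : α}

theorem holderConjugate_conjExp (hx : 1 ≤ p x) :
    (p x).HolderConjugate (conjExp p x) := by
  by_cases hpt : p x = ⊤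
  · simpa [conjExp, hpt] using HolderConjugate.top_one
  have hp0 : p x ≠ 0 := (one_pos.trans_le hx).ne'
  rw [ENNReal.holderConjugate_iff]
  calc (p x)⁻¹ + (conjExp p x)⁻¹ = (p x)⁻¹ + (p x - 1) / p x := by
        rw [conjExp, if_neg hpt, ENNReal.inv_div (.inr hpt) (.inr hp0)]
    _ = (1 + (p x - 1)) / p x := by rw [ENNReal.add_div, one_div]
    _ = 1 := by rw [add_tsub_cancel_of_le hx, ENNReal.div_self hp0 hpt]

theorem conjExp_eq_top_iff (hx : 1 ≤ p x) :
    conjExp p x = ⊤ ↔ p x = 1 := by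
  have := holderConjugate_conjExp hx
  exact HolderConjugate.eq_top_iff_eq_one _ _

theorem one_le_toReal_conjExp (hx : 1 ≤ p x) (hx1 : p x ≠ 1) :
    1 ≤ (conjExp p x).toReal := by
  have := (holderConjugate_conjExp hx).symm
  simpa using toReal_mono ((conjExp_eq_top_iff hx).not.2 hx1) (HolderConjugate.one_le _ (p x))

theorem holderConjugate_toReal_conjExp (hx : 1 ≤ p x) (hx1 : p x ≠ 1) (hxt : p x ≠ ⊤) :
    (p x).toReal.HolderConjugate (conjExp p x).toReal := by
  have := holderConjugate_conjExp hx
  exact HolderConjugate.toReal_of_ne_top hxt ((conjExp_eq_top_iff hx).not.2 hx1)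

theorem measurable_conjExp {p : X → ℝ≥0∞} (hp : Measurable p) : Measurable (conjExp p) :=
  .ite (hp (measurableSet_singleton ⊤)) measurable_const (hp.div (hp.sub_const 1))

end ConjExp

section SigmaFinite

variable {μ : Measure X}

theorem lintegral_le_of_forall_setLIntegral_ne_top [SigmaFinite μ] {f : X → ℝ≥0∞}
    (hf : ∀ᵐ x ∂μ, f x ≠ ⊤) {c : ℝ≥0∞}
    (h : ∀ s, MeasurableSet s → ∫⁻ x in s, f x ∂μ ≠ ⊤ → ∫⁻ x in s, f x ∂μ ≤ c) :
    ∫⁻ x, f x ∂μ ≤ c := by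
  have : SigmaFinite (μ.withDensity f) := .withDensity_of_ne_top hf
  have key : ∫⁻ _, 1 ∂μ.withDensity f ≤ c :=
    lintegral_le_of_forall_fin_meas_le c fun s hs hfin => by
      rw [setLIntegral_one, withDensity_apply _ hs] at *
      exact h s hs hfin
  simpa using key

theorem sigmaFinite_of_measure_ball_ne_top {d : X → X → ℝ} (x : X)
    (hfin : ∀ r, 0 < r → μ (ball d x r) ≠ ⊤) : SigmaFinite μ :=
  ⟨⟨{ set := fun n => ball d x (n + 1)
      set_mem := fun _ => trivial
      finite := fun n => (hfin _ (by positivity)).lt_top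
      spanning := Set.eq_univ_of_forall fun y => Set.mem_iUnion.2 <|
        (exists_nat_gt (d x y)).imp fun _ hn => hn.trans (lt_add_one _) }⟩⟩

end SigmaFinite

theorem rpow_sub_one_mul_self {a : ℝ≥0∞} {q : ℝ} (hq : 1 ≤ q) : a ^ (q - 1) * a = a ^ q := by
  simpa using (ENNReal.rpow_add_of_nonneg (x := a) _ _ (sub_nonneg.2 hq) zero_le_one).symm

section AssociateNorm

/-- The associate norm `sup {∫ h v dμ | ‖h‖_{p(·)} ≤ 1}` of `v` is at most `A`, in the homogeneous
form which tests every measurable `h` against `A ‖h‖_{p(·)}`. -/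
def AssociateNormLE (μ : Measure X) (p v : X → ℝ≥0∞) (A : ℝ≥0∞) : Prop :=
  ∀ h : X → ℝ≥0∞, Measurable h → ∫⁻ x, h x * v x ∂μ ≤ A * luxNorm μ p h

variable {μ : Measure X} {p v : X → ℝ≥0∞} {A : ℝ≥0∞}

theorem AssociateNormLE.setLIntegral_rpow_conjExp_le (H : AssociateNormLE μ p v 1)
    (hp : Measurable p) (hp1 : ∀ x, 1 ≤ p x) (hv : Measurable v)
    {s : Set X} (hs : MeasurableSet s) (hsp : ∀ x ∈ s, p x ≠ 1)
    (hfin : ∫⁻ x in s, (v x / 3) ^ (conjExp p x).toReal ∂μ ≠ ⊤) :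
    ∫⁻ x in s, (v x / 3) ^ (conjExp p x).toReal ∂μ ≤ 2⁻¹ := by
  set q : X → ℝ := fun x => (conjExp p x).toReal
  set u : X → ℝ≥0∞ := fun x => v x / 3
  set J := ∫⁻ x in s, u x ^ q x ∂μ
  have hq : Measurable q := (measurable_conjExp hp).ennreal_toReal
  have hu : Measurable u := hv.div_const 3
  have hprod : ∀ x ∈ s, u x ^ (q x - 1) * v x = 3 * u x ^ q x := fun x hx => by
    calc u x ^ (q x - 1) * v x = u x ^ (q x - 1) * (3 * u x) := by
          rw [ENNReal.mul_div_cancel three_ne_zero (by simp)]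
      _ = 3 * u x ^ q x := by
          rw [mul_left_comm, rpow_sub_one_mul_self (one_le_toReal_conjExp (hp1 x) (hsp x hx))]
  have hpow : ∀ x ∈ s, p x ≠ ⊤ → (u x ^ (q x - 1)) ^ (p x).toReal ≤ u x ^ q x := fun x hx hpx => by
    rw [← ENNReal.rpow_mul,
      (holderConjugate_toReal_conjExp (hp1 x) (hsp x hx) hpx).symm.sub_one_mul_conj]
  have hone : ∀ x ∈ s, p x = ⊤ → u x ^ (q x - 1) ≤ 1 := fun x _ hpx => by
    simp [q, conjExp, hpx]
  -- Test against `u ^ (q - 1)`, extremal in Hölder's inequality; its modular is at most `J + 1`,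
  -- the `1` coming from the set where `p = ∞`.
  have hJ : 3 * J ≤ J + 1 := by
    calc 3 * J = ∫⁻ x, s.indicator (fun x => u x ^ (q x - 1)) x * v x ∂μ := by
          simp only [← Set.indicator_mul_left]
          rw [lintegral_indicator hs, setLIntegral_congr_fun hs hprod,
            lintegral_const_mul _ (hu.pow hq)]
      _ ≤ 1 * luxNorm μ p (s.indicator fun x => u x ^ (q x - 1)) :=
          H _ ((hu.pow (hq.sub_const 1)).indicator hs)
      _ ≤ J + 1 := by
          rw [one_mul]
          exact luxNorm_indicator_le_lintegral_add_one hp hp1 hs hpow hone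
  have htwo : J * 2 ≤ 1 := by
    refine ENNReal.le_of_add_le_add_left hfin (le_trans (le_of_eq ?_) hJ)
    ring
  exact ENNReal.le_inv_iff_mul_le.2 htwo

variable [SigmaFinite μ]

theorem AssociateNormLE.ae_le_of_exponent_eq_one (H : AssociateNormLE μ p v A)
    (hp : Measurable p) (hp1 : ∀ x, 1 ≤ p x) (hv : Measurable v) :
    ∀ᵐ x ∂μ.restrict {x | p x = 1}, v x ≤ A := by
  set E := {x | p x = 1}
  have hE : MeasurableSet E := hp (measurableSet_singleton 1)
  refine ae_le_of_forall_setLIntegral_le_of_sigmaFinite hv fun s hs _ => ?_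
  rw [Measure.restrict_restrict hs, ← lintegral_indicator (hs.inter hE)]
  calc ∫⁻ x, (s ∩ E).indicator v x ∂μ
      = ∫⁻ x, E.indicator (s.indicator 1) x * v x ∂μ := by
        simp [Set.indicator_indicator, Set.inter_comm, ← Set.indicator_mul_left]
    _ ≤ A * luxNorm μ p (E.indicator (s.indicator 1)) :=
        H _ ((measurable_one.indicator hs).indicator hE)
    _ ≤ A * ∫⁻ x in E, s.indicator 1 x ∂μ := by
        gcongr
        exact luxNorm_indicator_exponent_eq_one_le hp hp1
    _ = ∫⁻ _ in s ∩ E, A ∂μ := by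
        rw [lintegral_indicator_one hs, Measure.restrict_apply hs, setLIntegral_const]

theorem AssociateNormLE.ae_ne_top (H : AssociateNormLE μ p v A) (hA : A ≠ ⊤)
    (hp : Measurable p) (hp1 : ∀ x, 1 ≤ p x) (hv : Measurable v) :
    ∀ᵐ x ∂μ, v x ≠ ⊤ := by
  refine ae_of_forall_measure_lt_top_ae_restrict _ fun s hs hμs => ?_
  have hint : ∫⁻ x in s, v x ∂μ ≤ A * (μ s + 1) := by
    calc ∫⁻ x in s, v x ∂μ = ∫⁻ x, s.indicator 1 x * v x ∂μ := by
          simp [← lintegral_indicator hs, ← Set.indicator_mul_left]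
      _ ≤ A * luxNorm μ p (s.indicator 1) := H _ (measurable_one.indicator hs)
      _ ≤ A * (∫⁻ _ in s, 1 ∂μ + 1) := by
          gcongr
          exact luxNorm_indicator_le_lintegral_add_one hp hp1 hs (by simp) (by simp)
      _ = A * (μ s + 1) := by rw [setLIntegral_one]
  have hfin : A * (μ s + 1) ≠ ⊤ := mul_ne_top hA (add_ne_top.2 ⟨hμs.ne, one_ne_top⟩)
  exact (ae_lt_top hv (ne_top_of_le_ne_top hfin hint)).mono fun _ hx => hx.ne

theorem AssociateNormLE.modular_conjExp_div_three_le_one (H : AssociateNormLE μ p v 1)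
    (hp : Measurable p) (hp1 : ∀ x, 1 ≤ p x) (hv : Measurable v) :
    modular μ (conjExp p) (fun x => v x / 3) ≤ 1 := by
  have hE : MeasurableSet {x | p x = 1} := hp (measurableSet_singleton 1)
  have hint : ∫⁻ x in {x | p x ≠ 1}, (v x / 3) ^ (conjExp p x).toReal ∂μ ≤ 2⁻¹ := by
    refine lintegral_le_of_forall_setLIntegral_ne_top ?_ fun s hs => ?_
    · filter_upwards [ae_restrict_of_ae (H.ae_ne_top one_ne_top hp hp1 hv)] with x hx
      exact rpow_ne_top_of_nonneg toReal_nonneg (div_ne_top hx three_ne_zero)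
    · rw [Measure.restrict_restrict hs]
      exact H.setLIntegral_rpow_conjExp_le hp hp1 hv (hs.inter hE.compl) fun x hx => hx.2
  have hsup : essSup (fun x => v x / 3) (μ.restrict {x | p x = 1}) ≤ 2⁻¹ := by
    refine essSup_le_of_ae_le _ ?_
    filter_upwards [H.ae_le_of_exponent_eq_one hp hp1 hv] with x hx
    calc v x / 3 ≤ 1 / 2 := ENNReal.div_le_div hx (by norm_num)
      _ = 2⁻¹ := one_div 2
  simp only [modular, ne_eq, conjExp_eq_top_iff (hp1 _)]
  exact (add_le_add hint hsup).trans_eq inv_two_add_inv_two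

theorem AssociateNormLE.luxNorm_conjExp_le (H : AssociateNormLE μ p v A)
    (hp : Measurable p) (hp1 : ∀ x, 1 ≤ p x) (hv : Measurable v) :
    luxNorm μ (conjExp p) v ≤ 3 * A := by
  have hscaled : luxNorm μ (conjExp p) (fun x => A⁻¹ * v x) ≤ 3 := by
    refine luxNorm_le three_pos
      (modular_conjExp_div_three_le_one (fun h hh => ?_) hp hp1 (hv.const_mul A⁻¹))
    calc ∫⁻ x, h x * (A⁻¹ * v x) ∂μ = A⁻¹ * ∫⁻ x, h x * v x ∂μ := by
          rw [← lintegral_const_mul A⁻¹ (f := fun x => h x * v x) (hh.mul hv)]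
          exact lintegral_congr fun x => mul_left_comm _ _ _
      _ ≤ A⁻¹ * (A * luxNorm μ p h) := by gcongr; exact H h hh
      _ ≤ 1 * luxNorm μ p h := by
          rw [← mul_assoc]
          gcongr
          exact ENNReal.inv_mul_le_one A
  rw [← ENNReal.div_le_iff_le_mul (.inr (by simp)) (.inr three_ne_zero), ENNReal.div_eq_inv_mul]
  exact (const_mul_luxNorm_le A⁻¹).trans hscaled

end AssociateNorm

section WeakType

/-- The weighted weak-type inequality `‖t χ_{Mf > t} w‖_{p(·)} ≤ C ‖f w‖_{p(·)}` for the maximal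
operator over quasi-metric balls. -/
def WeakType (d : X → X → ℝ) (μ : Measure X) (p w : X → ℝ≥0∞) (C : ℝ≥0) : Prop :=
  ∀ f : X → ℝ≥0∞, Measurable f → ∀ t : ℝ≥0, 0 < t →
    luxNorm μ p ({x | (t : ℝ≥0∞) < maximal d μ f x}.indicator fun x => (t : ℝ≥0∞) * w x) ≤
      C * luxNorm μ p (fun x => f x * w x)

variable {d : X → X → ℝ} {μ : Measure X} {p w : X → ℝ≥0∞} {C : ℝ≥0}

theorem setLAverage_ball_le_maximal {f : X → ℝ≥0∞} {x y : X} {r : ℝ} (hr : 0 < r)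
    (hy : y ∈ ball d x r) : ⨍⁻ z in ball d x r, f z ∂μ ≤ maximal d μ f y := by
  rw [setLAverage_eq, ENNReal.div_eq_inv_mul]
  exact le_iSup_of_le x (le_iSup_of_le r (le_iSup_of_le ⟨hr, hy⟩ le_rfl))

theorem WeakType.setLAverage_mul_luxNorm_indicator_le
    (hweak : WeakType d μ p w C) {f : X → ℝ≥0∞} (hf : Measurable f) (x : X) {r : ℝ} (hr : 0 < r) :
    (⨍⁻ y in ball d x r, f y ∂μ) * luxNorm μ p ((ball d x r).indicator w) ≤
      C * luxNorm μ p (fun y => f y * w y) := by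
  refine mul_le_of_forall_lt fun t ht b hb => ?_
  lift t to ℝ≥0 using ht.ne_top
  rcases eq_zero_or_pos t with rfl | ht0
  · simp
  have hsub : ball d x r ⊆ {y | (t : ℝ≥0∞) < maximal d μ f y} := fun y hy =>
    ht.trans_le (setLAverage_ball_le_maximal hr hy)
  calc (t : ℝ≥0∞) * b ≤ t * luxNorm μ p ((ball d x r).indicator w) := by gcongr
    _ ≤ luxNorm μ p (fun y => t * (ball d x r).indicator w y) := const_mul_luxNorm_le _
    _ = luxNorm μ p ((ball d x r).indicator fun y => t * w y) := by
        congr with y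
        exact (Set.indicator_mul_right _ (fun _ => (t : ℝ≥0∞)) w).symm
    _ ≤ luxNorm μ p ({y | (t : ℝ≥0∞) < maximal d μ f y}.indicator fun y => t * w y) :=
        luxNorm_mono (Set.indicator_le_indicator_of_subset hsub fun _ => zero_le)
    _ ≤ C * luxNorm μ p (fun y => f y * w y) := hweak f hf t ht0

theorem WeakType.associateNormLE (hweak : WeakType d μ p w C) (hw : Measurable w)
    {x : X} {r : ℝ} (hr : 0 < r) (hmeas : MeasurableSet (ball d x r))
    (hfin : μ (ball d x r) ≠ ⊤) :
    AssociateNormLE μ p (fun y => luxNorm μ p ((ball d x r).indicator w) *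
      (ball d x r).indicator (fun y => (w y)⁻¹) y) (C * μ (ball d x r)) := by
  intro h hh
  set B := ball d x r
  set N := luxNorm μ p (B.indicator w)
  have hhw : Measurable fun y => h y * (w y)⁻¹ := hh.mul hw.inv
  calc ∫⁻ y, h y * (N * B.indicator (fun y => (w y)⁻¹) y) ∂μ
      = ∫⁻ y, N * B.indicator (fun y => h y * (w y)⁻¹) y ∂μ := by
        simp only [Set.indicator_mul_right, mul_left_comm]
    _ = N * ∫⁻ y in B, h y * (w y)⁻¹ ∂μ := by
        rw [lintegral_const_mul _ (hhw.indicator hmeas), lintegral_indicator hmeas]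
    _ = μ B * ((⨍⁻ y in B, h y * (w y)⁻¹ ∂μ) * N) := by
        rw [← measure_mul_setLAverage _ hfin]; ring
    _ ≤ μ B * (C * luxNorm μ p (fun y => h y * (w y)⁻¹ * w y)) := by
        gcongr μ B * ?_
        exact hweak.setLAverage_mul_luxNorm_indicator_le hhw x hr
    _ ≤ μ B * (C * luxNorm μ p h) := by
        gcongr
        refine luxNorm_mono fun y => ?_
        rw [mul_assoc]
        exact mul_le_of_le_one_right' (ENNReal.inv_mul_le_one (w y))
    _ = C * μ B * luxNorm μ p h := by ring

theorem Apvar_of_weak_type_general (hmeas : ∀ x r, MeasurableSet (ball d x r))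
    (hfin : ∀ x r, 0 < r → μ (ball d x r) ≠ ⊤)
    (hp : Measurable p) (hp1 : ∀ x, 1 ≤ p x) (hw : Measurable w) (hweak : WeakType d μ p w C) :
    Apvar d μ p w := by
  refine ⟨3 * C, fun x r hr => ?_⟩
  have : SigmaFinite μ := sigmaFinite_of_measure_ball_ne_top x (hfin x)
  have hv : Measurable ((ball d x r).indicator fun y => (w y)⁻¹) := hw.inv.indicator (hmeas x r)
  calc luxNorm μ p ((ball d x r).indicator w) *
        luxNorm μ (conjExp p) ((ball d x r).indicator fun y => (w y)⁻¹)
      ≤ luxNorm μ (conjExp p) (fun y => luxNorm μ p ((ball d x r).indicator w) *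
          (ball d x r).indicator (fun y => (w y)⁻¹) y) := const_mul_luxNorm_le _
    _ ≤ 3 * (C * μ (ball d x r)) :=
        (hweak.associateNormLE hw hr (hmeas x r) (hfin x r hr)).luxNorm_conjExp_le hp hp1
          (hv.const_mul _)
    _ = (3 * C : ℝ≥0) * μ (ball d x r) := by push_cast; ring

end WeakType

theorem Apvar_of_weak_type
    {X : Type*} [MeasurableSpace X] (d : X → X → ℝ) (μ : Measure X) (A₀ Cμ : ℝ)
    (hX : IsSHT d μ A₀ Cμ) (x₀ : X)
    (p : X → ℝ) (hpmeas : Measurable p) (hp1 : ∀ x, 1 ≤ p x)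
    (hLH : LH d x₀ p)
    (w : X → ℝ≥0∞) (hw : IsWeight d μ w)
    (C : ℝ≥0) (hC : 0 < C)
    (hweak : ∀ f : X → ℝ≥0∞, Measurable f → ∀ t : ℝ≥0, 0 < t →
      luxNorm μ (ofRealExp p)
          ({x | (t : ℝ≥0∞) < maximal d μ f x}.indicator fun x => (t : ℝ≥0∞) * w x) ≤
        C * luxNorm μ (ofRealExp p) (fun x => f x * w x)) :
    Apvar d μ (ofRealExp p) w :=
  Apvar_of_weak_type_general hX.measurableSet_ball hX.ball_ne_top hpmeas.ennreal_ofReal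
    (fun x => one_le_ofReal.2 (hp1 x)) hw.1 hweak

end SHT
end

section
/- Let (X,d,μ) be a space of homogeneous type and let p(·) be an exponent function with p(·) ∈ LH. Then there exists a constant C such that for all quasi-metric balls B ⊆ X, μ(B)^{p₋(B)−p₊(B)} ≤ C, where p₋(B) = essinf_{x∈B} p(x) and p₊(B) = esssup_{x∈B} p(x). -/
open MeasureTheory ENNReal NNReal Filter

namespace SHT

variable {X : Type*} [MeasurableSpace X]

/-!
Points `x`, `y` of a ball `B = B(z, r)` satisfy `d x y ≤ 2 A₀ r`, so the local condition bounds
`|p x - p y| log (1 + 1/r)`; if moreover `2 A₀ r ≤ d z x₀`, then `B` stays at distance comparable to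
`d z x₀` from `x₀`, and the condition at infinity bounds `|p x - p y| log (1 + d z x₀)`. In both
regimes `|p x - p y| log (1 + (1 + d z x₀) / r)` is bounded. Since `B(x₀, 1)` is contained in the
dilate of `B` by a factor `A₀ (1 + (1 + d z x₀) / r)`, doubling bounds `-log μ(B)` by an affine
function of that same logarithm, so `|p x - p y| (-log μ(B))` is bounded on `B × B`.
-/

section Real

theorem one_le_log_exp_one_add {t : ℝ} (ht : 0 ≤ t) : 1 ≤ Real.log (Real.exp 1 + t) := by
  rw [Real.le_log_iff_exp_le (by positivity)]
  linarith

theorem mul_log_le_of_le_mul {o M a b c : ℝ} (ho : 0 ≤ o) (hoM : o ≤ M) (ha : 0 < a) (hb : 0 < b)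
    (hc : 1 ≤ c) (h : a ≤ c * b) : o * Real.log a ≤ M * Real.log c + o * Real.log b := by
  have hc' : 0 ≤ Real.log c := Real.log_nonneg hc
  calc o * Real.log a ≤ o * Real.log (c * b) := by gcongr
    _ = o * Real.log c + o * Real.log b := by
      rw [Real.log_mul (by positivity) hb.ne', mul_add]
    _ ≤ M * Real.log c + o * Real.log b := by gcongr

theorem log_one_add_inv_le_two_mul_neg_log {t : ℝ} (ht : 0 < t) (ht' : t ≤ 1 / 2) :
    Real.log (1 + t⁻¹) ≤ 2 * -Real.log t := by
  have h : 1 + t⁻¹ ≤ t⁻¹ ^ 2 := by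
    have : 2 ≤ t⁻¹ := by simpa using inv_anti₀ ht ht'
    nlinarith
  calc Real.log (1 + t⁻¹) ≤ Real.log (t⁻¹ ^ 2) := Real.log_le_log (by positivity) h
    _ = 2 * -Real.log t := by rw [Real.log_pow, Real.log_inv, Nat.cast_ofNat]

end Real

section EssentialOscillation

variable {α : Type*} [MeasurableSpace α]

theorem essSup_sub_essInf_mem_Icc {ν : Measure α} [NeZero ν] {f : α → ℝ} {M : ℝ}
    (h : ∀ᵐ x ∂ν, ∀ᵐ y ∂ν, |f x - f y| ≤ M) : essSup f ν - essInf f ν ∈ Set.Icc 0 M := by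
  obtain ⟨x, hx⟩ := h.exists
  have bddAbove : IsBoundedUnder (· ≤ ·) (ae ν) f :=
    isBoundedUnder_of_eventually_le (a := f x + M) <| by
      filter_upwards [hx] with y hy using by linarith [neg_le_of_abs_le hy]
  have bddBelow : IsBoundedUnder (· ≥ ·) (ae ν) f :=
    isBoundedUnder_of_eventually_ge (a := f x - M) <| by
      filter_upwards [hx] with y hy using by linarith [le_of_abs_le hy]
  have sup_le : ∀ᵐ x ∂ν, essSup f ν ≤ f x + M := by
    filter_upwards [h] with x hx
    refine limsup_le_of_le bddBelow.isCoboundedUnder_le ?_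
    filter_upwards [hx] with y hy using by linarith [neg_le_of_abs_le hy]
  have le_inf : essSup f ν - M ≤ essInf f ν := by
    refine le_liminf_of_le bddAbove.isCoboundedUnder_ge ?_
    filter_upwards [sup_le] with x hx using by linarith
  exact ⟨sub_nonneg.2 (liminf_le_limsup bddAbove bddBelow), by linarith⟩

theorem measure_rpow_essInf_sub_essSup_le {μ : Measure α} {s : Set α} (hs : MeasurableSet s)
    (hs₀ : μ s ≠ 0) (hs_top : μ s ≠ ⊤) {f : α → ℝ} {M K : ℝ}
    (hM : ∀ x ∈ s, ∀ y ∈ s, |f x - f y| ≤ M)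
    (hK : ∀ x ∈ s, ∀ y ∈ s, |f x - f y| * -Real.log (μ.real s) ≤ K) :
    μ s ^ (essInf f (μ.restrict s) - essSup f (μ.restrict s)) ≤ ENNReal.ofReal (Real.exp K) := by
  have : NeZero (μ.restrict s) := ⟨by simpa using hs₀⟩
  have osc_mem {N : ℝ} (hN : ∀ x ∈ s, ∀ y ∈ s, |f x - f y| ≤ N) :
      essSup f (μ.restrict s) - essInf f (μ.restrict s) ∈ Set.Icc 0 N := by
    refine essSup_sub_essInf_mem_Icc ?_
    filter_upwards [ae_restrict_mem hs] with x hx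
    filter_upwards [ae_restrict_mem hs] with y hy using hN x hx y hy
  have hpos : 0 < μ.real s := ENNReal.toReal_pos hs₀ hs_top
  have osc_mul_le : (essSup f (μ.restrict s) - essInf f (μ.restrict s)) *
      -Real.log (μ.real s) ≤ K := by
    rcases le_or_gt (-Real.log (μ.real s)) 0 with hlog | hlog
    · obtain ⟨x, hx⟩ := nonempty_of_measure_ne_zero hs₀
      have hK₀ : 0 ≤ K := by simpa using hK x hx x hx
      exact (mul_nonpos_of_nonneg_of_nonpos (osc_mem hM).1 hlog).trans hK₀
    · rw [← le_div_iff₀ hlog]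
      exact (osc_mem fun x hx y hy => (le_div_iff₀ hlog).2 (hK x hx y hy)).2
  rw [← ofReal_measureReal hs_top, ENNReal.ofReal_rpow_of_pos hpos, Real.rpow_def_of_pos hpos]
  gcongr
  linarith

end EssentialOscillation

section QuasiMetric

/-- `d` is a quasi-metric with constant `A`: the part of `IsSHT` that does not involve a measure. -/
structure IsQuasiMetric {α : Type*} (d : α → α → ℝ) (A : ℝ) : Prop where
  nonneg : ∀ x y, 0 ≤ d x y
  eq_zero_iff : ∀ x y, d x y = 0 ↔ x = y
  symm : ∀ x y, d x y = d y x
  one_le : 1 ≤ A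
  triangle : ∀ x y z, d x y ≤ A * (d x z + d z y)

variable {α : Type*} {d : α → α → ℝ} {A : ℝ} {x₀ : α} {p : α → ℝ} {pinf M : ℝ}

theorem IsQuasiMetric.lt_of_mem_ball (hd : IsQuasiMetric d A) {x y z : α} {r : ℝ}
    (hx : x ∈ ball d z r) (hy : y ∈ ball d z r) : d x y < 2 * A * r := by
  have hA := hd.one_le
  have hx : d x z < r := hd.symm x z ▸ hx
  have hy : d z y < r := hy
  calc d x y ≤ A * (d x z + d z y) := hd.triangle x y z
    _ < A * (r + r) := by gcongr
    _ = 2 * A * r := by ring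

theorem IsQuasiMetric.le_two_mul_of_mem_ball (hd : IsQuasiMetric d A) {x z : α} {r : ℝ}
    (hr : 2 * A * r ≤ d z x₀) (hx : x ∈ ball d z r) : d z x₀ ≤ 2 * A * d x x₀ := by
  have hA := hd.one_le
  have hx : d z x < r := hx
  have : d z x₀ ≤ A * (r + d x x₀) := (hd.triangle z x₀ x).trans (by gcongr)
  linarith

theorem ball_subset_ball {z : α} {r s : ℝ} (h : r ≤ s) : ball d z r ⊆ ball d z s :=
  fun y (hy : d z y < r) => hy.trans_le h

theorem IsQuasiMetric.ball_subset_ball_add (hd : IsQuasiMetric d A) (x z : α) (r : ℝ) :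
    ball d x r ⊆ ball d z (A * (d z x + r)) := by
  intro y (hy : d x y < r)
  have hA := hd.one_le
  calc d z y ≤ A * (d z x + d x y) := hd.triangle z y x
    _ < A * (d z x + r) := by gcongr

theorem LH0.exists_abs_sub_mul_log_inv_dist_le (hp : LH0 d p) (hd : IsQuasiMetric d A)
    (hM : ∀ x y, |p x - p y| ≤ M) : ∃ K, ∀ x y, |p x - p y| * Real.log (1 + (d x y)⁻¹) ≤ K := by
  obtain ⟨C₀, -, hC₀⟩ := hp
  refine ⟨max (2 * C₀) (M * Real.log 3), fun x y => ?_⟩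
  have hM₀ : 0 ≤ M := (abs_nonneg _).trans (hM x y)
  rcases (hd.nonneg x y).eq_or_lt with hxy | hxy
  · obtain rfl := (hd.eq_zero_iff x y).1 hxy.symm
    rw [sub_self, abs_zero, zero_mul]
    exact le_max_of_le_right (by positivity)
  rcases lt_or_ge (d x y) (1 / 2) with hnear | hfar
  · have hlog : 0 < -Real.log (d x y) := neg_pos.2 (Real.log_neg hxy (by linarith))
    refine le_max_of_le_left ?_
    calc |p x - p y| * Real.log (1 + (d x y)⁻¹)
        ≤ |p x - p y| * (2 * -Real.log (d x y)) := by
          gcongr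
          exact log_one_add_inv_le_two_mul_neg_log hxy hnear.le
      _ = 2 * (|p x - p y| * -Real.log (d x y)) := by ring
      _ ≤ 2 * C₀ := by
          gcongr
          exact (le_div_iff₀ hlog).1 (hC₀ x y hxy hnear)
  · have hinv : (d x y)⁻¹ ≤ 2 := by simpa using inv_anti₀ (by norm_num) hfar
    refine le_max_of_le_right ?_
    calc |p x - p y| * Real.log (1 + (d x y)⁻¹) ≤ |p x - p y| * Real.log 3 := by
          gcongr
          linarith
      _ ≤ M * Real.log 3 := by
          gcongr
          exact hM x y

theorem LH0.exists_abs_sub_mul_log_inv_radius_le (hp : LH0 d p) (hd : IsQuasiMetric d A)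
    (hM : ∀ x y, |p x - p y| ≤ M) :
    ∃ K, ∀ z r, 0 < r → ∀ x ∈ ball d z r, ∀ y ∈ ball d z r,
      |p x - p y| * Real.log (1 + r⁻¹) ≤ K := by
  obtain ⟨K, hK⟩ := hp.exists_abs_sub_mul_log_inv_dist_le hd hM
  have hA := hd.one_le
  refine ⟨M * Real.log (2 * A) + K, fun z r hr x hx y hy => ?_⟩
  rcases (hd.nonneg x y).eq_or_lt with hxy | hxy
  · obtain rfl := (hd.eq_zero_iff x y).1 hxy.symm
    have hM₀ : 0 ≤ M := (abs_nonneg _).trans (hM x x)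
    have hK₀ : 0 ≤ K := by simpa using hK x x
    have hlog : 0 ≤ Real.log (2 * A) := Real.log_nonneg (by linarith)
    rw [sub_self, abs_zero, zero_mul]
    positivity
  · have hinv : 1 + r⁻¹ ≤ 2 * A * (1 + (d x y)⁻¹) := by
      have : r⁻¹ ≤ 2 * A * (d x y)⁻¹ := by
        rw [← div_eq_mul_inv, le_div_iff₀ hxy, inv_mul_le_iff₀ hr]
        linarith [hd.lt_of_mem_ball hx hy]
      linarith
    refine (mul_log_le_of_le_mul (abs_nonneg _) (hM x y) (by positivity) (by positivity)
      (by linarith) hinv).trans ?_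
    gcongr
    exact hK x y

theorem LHinf.exists_abs_sub_mul_log_le (hp : LHinf d x₀ p pinf) (hd : ∀ x, 0 ≤ d x x₀) :
    ∃ C, ∀ x, |p x - pinf| * Real.log (Real.exp 1 + d x x₀) ≤ C := by
  obtain ⟨C, -, hC⟩ := hp
  exact ⟨C, fun x => (le_div_iff₀ (zero_lt_one.trans_le (one_le_log_exp_one_add (hd x)))).1 (hC x)⟩

theorem LHinf.exists_abs_sub_le (hp : LHinf d x₀ p pinf) (hd : ∀ x, 0 ≤ d x x₀) :
    ∃ C, ∀ x, |p x - pinf| ≤ C := by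
  obtain ⟨C, hC⟩ := hp.exists_abs_sub_mul_log_le hd
  exact ⟨C, fun x =>
    (le_mul_of_one_le_right (abs_nonneg _) (one_le_log_exp_one_add (hd x))).trans (hC x)⟩

theorem LHinf.exists_abs_sub_mul_log_dist_le (hp : LHinf d x₀ p pinf) (hd : IsQuasiMetric d A) :
    ∃ K, ∀ z r, 2 * A * r ≤ d z x₀ → ∀ x ∈ ball d z r, ∀ y ∈ ball d z r,
      |p x - p y| * Real.log (1 + d z x₀) ≤ K := by
  have hd₀ (x : α) : 0 ≤ d x x₀ := hd.nonneg x x₀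
  obtain ⟨C, hC⟩ := hp.exists_abs_sub_mul_log_le hd₀
  obtain ⟨C', hC'⟩ := hp.exists_abs_sub_le hd₀
  refine ⟨2 * (C' * Real.log (2 * A) + C), fun z r hr x hx y hy => ?_⟩
  have hA := hd.one_le
  have key : ∀ w ∈ ball d z r,
      |p w - pinf| * Real.log (1 + d z x₀) ≤ C' * Real.log (2 * A) + C := by
    intro w hw
    have hle : 1 + d z x₀ ≤ 2 * A * (Real.exp 1 + d w x₀) := by
      nlinarith [hd.le_two_mul_of_mem_ball hr hw, Real.add_one_le_exp 1]
    have hz := hd₀ z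
    have hw₀ := hd₀ w
    refine (mul_log_le_of_le_mul (abs_nonneg _) (hC' w) (by positivity) (by positivity)
      (by linarith) hle).trans ?_
    gcongr
    exact hC w
  have hlog : 0 ≤ Real.log (1 + d z x₀) := Real.log_nonneg (by linarith [hd₀ z])
  calc |p x - p y| * Real.log (1 + d z x₀)
      ≤ (|p x - pinf| + |p y - pinf|) * Real.log (1 + d z x₀) := by
        gcongr
        exact dist_triangle_right (p x) (p y) pinf
    _ ≤ 2 * (C' * Real.log (2 * A) + C) := by linarith [key x hx, key y hy]

theorem LH.exists_abs_sub_le (hp : LH d x₀ p) (hd : ∀ x, 0 ≤ d x x₀) :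
    ∃ M, ∀ x y, |p x - p y| ≤ M := by
  obtain ⟨-, pinf, hinf⟩ := hp
  obtain ⟨C, hC⟩ := hinf.exists_abs_sub_le hd
  exact ⟨C + C, fun x y =>
    (dist_triangle_right (p x) (p y) pinf).trans (add_le_add (hC x) (hC y))⟩

theorem LH.exists_abs_sub_mul_log_le (hp : LH d x₀ p) (hd : IsQuasiMetric d A) :
    ∃ K, ∀ z r, 0 < r → ∀ x ∈ ball d z r, ∀ y ∈ ball d z r,
      |p x - p y| * Real.log (1 + (1 + d z x₀) / r) ≤ K := by
  obtain ⟨M, hM⟩ := hp.exists_abs_sub_le (hd.nonneg · x₀)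
  obtain ⟨hloc, pinf, hinf⟩ := hp
  obtain ⟨K₀, hK₀⟩ := hloc.exists_abs_sub_mul_log_inv_radius_le hd hM
  obtain ⟨K₁, hK₁⟩ := hinf.exists_abs_sub_mul_log_dist_le hd
  refine ⟨max (M * Real.log (3 * A) + K₀) (K₀ + K₁), fun z r hr x hx y hy => ?_⟩
  have hA := hd.one_le
  have hz := hd.nonneg z x₀
  rcases lt_or_ge (d z x₀) (2 * A * r) with hnear | hfar
  · have hle : 1 + (1 + d z x₀) / r ≤ 3 * A * (1 + r⁻¹) := by
      have : d z x₀ / r ≤ 2 * A := (div_le_iff₀ hr).2 hnear.le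
      have : r⁻¹ ≤ 3 * A * r⁻¹ := le_mul_of_one_le_left (by positivity) (by linarith)
      rw [add_div, one_div]
      linarith
    refine le_max_of_le_left <| (mul_log_le_of_le_mul (abs_nonneg _) (hM x y) (by positivity)
      (by positivity) (by linarith) hle).trans ?_
    gcongr
    exact hK₀ z r hr x hx y hy
  · have hle : 1 + (1 + d z x₀) / r ≤ (1 + r⁻¹) * (1 + d z x₀) := by
      rw [div_eq_mul_inv]
      linarith
    refine le_max_of_le_right ?_
    calc |p x - p y| * Real.log (1 + (1 + d z x₀) / r)
        ≤ |p x - p y| * Real.log ((1 + r⁻¹) * (1 + d z x₀)) := by gcongr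
      _ = |p x - p y| * Real.log (1 + r⁻¹) + |p x - p y| * Real.log (1 + d z x₀) := by
        rw [Real.log_mul (by positivity) (by positivity), mul_add]
      _ ≤ K₀ + K₁ := add_le_add (hK₀ z r hr x hx y hy) (hK₁ z r hfar x hx y hy)

end QuasiMetric

section Doubling

variable {d : X → X → ℝ} {μ : Measure X} {A₀ Cμ : ℝ}

theorem IsSHT.isQuasiMetric (hX : IsSHT d μ A₀ Cμ) : IsQuasiMetric d A₀ :=
  ⟨hX.d_nonneg, hX.d_eq_zero_iff, hX.d_symm, hX.one_le_A₀, hX.d_triangle⟩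

theorem IsSHT.measureReal_ball_pos (hX : IsSHT d μ A₀ Cμ) (z : X) {r : ℝ} (hr : 0 < r) :
    0 < μ.real (ball d z r) :=
  ENNReal.toReal_pos (hX.ball_pos z r hr).ne' (hX.ball_ne_top z r hr)

theorem IsSHT.measureReal_ball_two_pow_mul_le (hX : IsSHT d μ A₀ Cμ) (z : X) {r : ℝ} (hr : 0 < r)
    (n : ℕ) : μ.real (ball d z (2 ^ n * r)) ≤ Cμ ^ n * μ.real (ball d z r) := by
  have hCμ : 0 ≤ Cμ := zero_le_one.trans hX.one_le_Cμ
  have doubling (s : ℝ) (hs : 0 < s) : μ.real (ball d z (2 * s)) ≤ Cμ * μ.real (ball d z s) := by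
    have := ENNReal.toReal_mono
      (ENNReal.mul_ne_top ENNReal.ofReal_ne_top (hX.ball_ne_top z s hs)) (hX.doubling z s hs)
    rwa [ENNReal.toReal_mul, ENNReal.toReal_ofReal hCμ] at this
  induction n with
  | zero => simp
  | succ n ih =>
    rw [pow_succ', mul_assoc, pow_succ', mul_assoc]
    exact (doubling _ (by positivity)).trans (by gcongr)

theorem IsSHT.log_measureReal_ball_mul_le (hX : IsSHT d μ A₀ Cμ) (z : X) {r t : ℝ} (hr : 0 < r)
    (ht : 1 ≤ t) :
    Real.log (μ.real (ball d z (t * r))) ≤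
      (Real.logb 2 t + 1) * Real.log Cμ + Real.log (μ.real (ball d z r)) := by
  set n := ⌈Real.logb 2 t⌉₊
  have ht₀ : 0 < t := zero_lt_one.trans_le ht
  have hCμ : 0 < Cμ := zero_lt_one.trans_le hX.one_le_Cμ
  have ht_le : t ≤ 2 ^ n := by
    rw [← Real.rpow_natCast, ← Real.logb_le_iff_le_rpow one_lt_two ht₀]
    exact Nat.le_ceil _
  have hsub : ball d z (t * r) ⊆ ball d z (2 ^ n * r) := ball_subset_ball (by gcongr)
  calc Real.log (μ.real (ball d z (t * r)))
      ≤ Real.log (Cμ ^ n * μ.real (ball d z r)) :=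
        Real.log_le_log (hX.measureReal_ball_pos z (by positivity)) <|
          (measureReal_mono hsub (hX.ball_ne_top z _ (by positivity))).trans
            (hX.measureReal_ball_two_pow_mul_le z hr n)
    _ = n * Real.log Cμ + Real.log (μ.real (ball d z r)) := by
        rw [Real.log_mul (by positivity) (hX.measureReal_ball_pos z hr).ne', Real.log_pow]
    _ ≤ (Real.logb 2 t + 1) * Real.log Cμ + Real.log (μ.real (ball d z r)) := by
        gcongr
        · exact Real.log_nonneg hX.one_le_Cμ
        · exact (Nat.ceil_lt_add_one (Real.logb_nonneg one_lt_two ht)).le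

theorem IsSHT.exists_neg_log_measureReal_ball_le (hX : IsSHT d μ A₀ Cμ) (x₀ : X) :
    ∃ a b : ℝ, 0 ≤ a ∧ 0 ≤ b ∧ ∀ z r, 0 < r →
      -Real.log (μ.real (ball d z r)) ≤ a + b * Real.log (1 + (1 + d z x₀) / r) := by
  have hA := hX.one_le_A₀
  have hlogC : 0 ≤ Real.log Cμ := Real.log_nonneg hX.one_le_Cμ
  have hlogA : 0 ≤ Real.logb 2 A₀ := Real.logb_nonneg one_lt_two hA
  refine ⟨(Real.logb 2 A₀ + 1) * Real.log Cμ + |Real.log (μ.real (ball d x₀ 1))|,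
    Real.log Cμ / Real.log 2, by positivity, by positivity, fun z r hr => ?_⟩
  have hz := hX.d_nonneg z x₀
  set t := 1 + (1 + d z x₀) / r
  have ht : 1 ≤ t := le_add_of_nonneg_right (by positivity)
  have ht₀ : 0 < t := zero_lt_one.trans_le ht
  have hsub : ball d x₀ 1 ⊆ ball d z (A₀ * t * r) := by
    refine (hX.isQuasiMetric.ball_subset_ball_add x₀ z 1).trans (ball_subset_ball ?_)
    rw [mul_assoc]
    gcongr
    rw [one_add_mul, div_mul_cancel₀ _ hr.ne']
    linarith
  have hlog : Real.log (μ.real (ball d x₀ 1)) ≤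
      (Real.logb 2 (A₀ * t) + 1) * Real.log Cμ + Real.log (μ.real (ball d z r)) :=
    (Real.log_le_log (hX.measureReal_ball_pos x₀ one_pos)
      (measureReal_mono hsub (hX.ball_ne_top z _ (by positivity)))).trans
        (hX.log_measureReal_ball_mul_le z hr (one_le_mul_of_one_le_of_one_le hA ht))
  have hsplit : (Real.logb 2 (A₀ * t) + 1) * Real.log Cμ =
      (Real.logb 2 A₀ + 1) * Real.log Cμ + Real.log Cμ / Real.log 2 * Real.log t := by
    rw [Real.logb_mul (by positivity) ht₀.ne', ← Real.log_div_log (x := t)]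
    ring
  linarith [neg_abs_le (Real.log (μ.real (ball d x₀ 1)))]

theorem LH.exists_abs_sub_mul_neg_log_measureReal_ball_le {x₀ : X} {p : X → ℝ} (hp : LH d x₀ p)
    (hX : IsSHT d μ A₀ Cμ) :
    ∃ K, ∀ z r, 0 < r → ∀ x ∈ ball d z r, ∀ y ∈ ball d z r,
      |p x - p y| * -Real.log (μ.real (ball d z r)) ≤ K := by
  obtain ⟨M, hM⟩ := hp.exists_abs_sub_le (hX.d_nonneg · x₀)
  obtain ⟨K, hK⟩ := hp.exists_abs_sub_mul_log_le hX.isQuasiMetric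
  obtain ⟨a, b, ha, hb, hab⟩ := hX.exists_neg_log_measureReal_ball_le x₀
  refine ⟨M * a + b * K, fun z r hr x hx y hy => ?_⟩
  calc |p x - p y| * -Real.log (μ.real (ball d z r))
      ≤ |p x - p y| * (a + b * Real.log (1 + (1 + d z x₀) / r)) := by
        gcongr
        exact hab z r hr
    _ = |p x - p y| * a + b * (|p x - p y| * Real.log (1 + (1 + d z x₀) / r)) := by ring
    _ ≤ M * a + b * K := by
        gcongr
        · exact hM x y
        · exact hK z r hr x hx y hy

end Doubling

theorem measure_ball_rpow_osc_le_general
    {X : Type*} [MeasurableSpace X] (d : X → X → ℝ) (μ : Measure X) (A₀ Cμ : ℝ)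
    (hX : IsSHT d μ A₀ Cμ) (x₀ : X) (p : X → ℝ) (hLH : LH d x₀ p) :
    ∃ C : ℝ≥0, ∀ (z : X) (rad : ℝ), 0 < rad →
      μ (ball d z rad) ^
          (essInf p (μ.restrict (ball d z rad)) - essSup p (μ.restrict (ball d z rad))) ≤ C := by
  obtain ⟨M, hM⟩ := hLH.exists_abs_sub_le (hX.d_nonneg · x₀)
  obtain ⟨K, hK⟩ := hLH.exists_abs_sub_mul_neg_log_measureReal_ball_le hX
  exact ⟨(Real.exp K).toNNReal, fun z rad hrad =>
    measure_rpow_essInf_sub_essSup_le (hX.measurableSet_ball z rad) (hX.ball_pos z rad hrad).ne'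
      (hX.ball_ne_top z rad hrad) (fun x _ y _ => hM x y) (hK z rad hrad)⟩

theorem measure_ball_rpow_osc_le
    {X : Type*} [MeasurableSpace X] (d : X → X → ℝ) (μ : Measure X) (A₀ Cμ : ℝ)
    (hX : IsSHT d μ A₀ Cμ) (x₀ : X)
    (p : X → ℝ) (hpmeas : Measurable p) (hp1 : ∀ x, 1 ≤ p x)
    (hLH : LH d x₀ p) :
    ∃ C : ℝ≥0, ∀ (z : X) (rad : ℝ), 0 < rad →
      μ (ball d z rad) ^
          (essInf p (μ.restrict (ball d z rad)) - essSup p (μ.restrict (ball d z rad))) ≤ C := by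
  exact measure_ball_rpow_osc_le_general d μ A₀ Cμ hX x₀ p hLH

end SHT
end
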